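/- arXiv:2209.01742 — 2 statements merged into one kernel-verified Lean document; each statement's English description precedes it below -/
import Mathlib

section
/- Let p be an odd prime. For every integer n ≥ 1, in the polynomial ring R = (ZMod p)[v₂, v₃, t₁] one has the exact identity η(σ_n) − σ_n = v₂^{p^{2n−2}}·t₁^{p^{2n}} − v₂^{a_{2n−1}}·t₁, where σ_n = Σ_{k=0}^{n−1} v₂^{p^{2k}·a_{2n−2k−1} − p^{2k+1}}·v₃^{p^{2k}}. (This is the congruence d₀(σ_n) ≡ v₂^{p^{2n−2}} t₁^{p^{2n}} − v₂^{a_{2n−1}} t₁ mod I₂ of the paper's Lemma 4.3, made exact in the free model of E(3)_*(E(3))/I₂ where the right unit sends v₃ to v₃ + v₂ t₁^{p²} − v₂^p t₁.) -/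
open MvPolynomial

/-- The Miller–Ravenel–Wilson exponents `a_n` for the prime `p`. -/
def mrwA (p n : ℕ) : ℕ :=
  if n = 0 then 1
  else if n % 2 = 1 then p ^ n + (p ^ (n - 1) - 1) / (p + 1)
  else p ^ n + p * ((p ^ (n - 2) - 1) / (p + 1))

/-- The polynomial ring `R = (ZMod p)[v₂, v₃, t₁]`; `X 0 = v₂`, `X 1 = v₃`, `X 2 = t₁`. -/
abbrev R (p : ℕ) := MvPolynomial (Fin 3) (ZMod p)

/-- The reduction mod `I₂` of the right unit: `η(v₂) = v₂`, `η(t₁) = t₁`,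
`η(v₃) = v₃ + v₂·t₁^{p²} − v₂^p·t₁`. -/
noncomputable def eta (p : ℕ) : R p →ₐ[ZMod p] R p :=
  aeval ![X 0, X 1 + X 0 * X 2 ^ (p ^ 2) - X 0 ^ p * X 2, X 2]

/-- `σ_n = Σ_{k=0}^{n−1} v₂^{p^{2k}·a_{2n−2k−1} − p^{2k+1}}·v₃^{p^{2k}}`. -/
noncomputable def sigma (p n : ℕ) : R p :=
  ∑ k ∈ Finset.range n,
    X 0 ^ (p ^ (2 * k) * mrwA p (2 * n - 2 * k - 1) - p ^ (2 * k + 1)) * X 1 ^ (p ^ (2 * k))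

/-!
The polynomial `σ_n` is additive in `v₃`, because `v₃` occurs in it only to powers of `p`. So
`η(σ_n) − σ_n` is obtained from `σ_n` by substituting `v₂ t₁^{p²} − v₂^p t₁` for `v₃`. Write
`u_j = v₂^{a_{2j+1}} t₁`. The relation `a_{2j+3} + 1 = p² a_{2j+1} + p` gives
`v₂^{a_{2j+3} − p} (v₂ t₁^{p²} − v₂^p t₁) = u_j^{p²} − u_{j+1}`, so after the substitution the
`k`-th summand of `σ_n` is the `p^{2k}`-th power of `u_{n−k−2}^{p²} − u_{n−k−1}` for `k < n − 1`,
and of `v₂ t₁^{p²} − u_0` for `k = n − 1`. The sum telescopes.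
-/

section Exponents

theorem mrwA_one (p : ℕ) : mrwA p 1 = p := by
  simp [mrwA]

theorem mrwA_two_mul_add_one (p m : ℕ) :
    mrwA p (2 * m + 1) = p ^ (2 * m + 1) + (p ^ (2 * m) - 1) / (p + 1) := by
  simp [mrwA, Nat.add_mod]

theorem le_mrwA_two_mul_add_one (p m : ℕ) : p ≤ mrwA p (2 * m + 1) :=
  calc
    p ≤ p ^ (2 * m + 1) := Nat.le_self_pow (by lia) p
    _ ≤ mrwA p (2 * m + 1) := mrwA_two_mul_add_one p m ▸ Nat.le_add_right _ _

theorem add_one_dvd_pow_two_mul_sub_one (p m : ℕ) : p + 1 ∣ p ^ (2 * m) - 1 := by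
  have hsq : p + 1 ∣ p ^ 2 - 1 := ⟨p - 1, by simpa using Nat.sq_sub_sq p 1⟩
  simpa [pow_mul] using hsq.trans (Nat.sub_dvd_pow_sub_pow (p ^ 2) 1 m)

variable {p : ℕ}

theorem add_one_mul_mrwA_two_mul_add_one (hp : 0 < p) (m : ℕ) :
    (p + 1) * mrwA p (2 * m + 1) + 1 = (p + 1) * p ^ (2 * m + 1) + p ^ (2 * m) := by
  have hpos : 0 < p ^ (2 * m) := Nat.pow_pos hp
  rw [mrwA_two_mul_add_one, mul_add, Nat.mul_div_cancel' (add_one_dvd_pow_two_mul_sub_one p m)]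
  lia

theorem mrwA_two_mul_add_three_add_one (hp : 0 < p) (m : ℕ) :
    mrwA p (2 * m + 3) + 1 = p ^ 2 * mrwA p (2 * m + 1) + p := by
  have hm := add_one_mul_mrwA_two_mul_add_one hp m
  have hm_succ := add_one_mul_mrwA_two_mul_add_one hp (m + 1)
  apply Nat.eq_of_mul_eq_mul_left p.succ_pos
  zify at hm hm_succ ⊢
  linear_combination hm_succ - (p : ℤ) ^ 2 * hm

theorem pow_mrwA_sub_mul_mul_pow_sub_pow_mul {A : Type*} [CommRing A] (hp : 0 < p)
    (m : ℕ) (v t : A) :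
    v ^ (mrwA p (2 * m + 3) - p) * (v * t ^ p ^ 2 - v ^ p * t) =
      (v ^ mrwA p (2 * m + 1) * t) ^ p ^ 2 - v ^ mrwA p (2 * m + 3) * t := by
  have hle : p ≤ mrwA p (2 * m + 3) := le_mrwA_two_mul_add_one p (m + 1)
  have hexp : mrwA p (2 * m + 3) - p + 1 = mrwA p (2 * m + 1) * p ^ 2 := by
    have := mrwA_two_mul_add_three_add_one hp m
    lia
  rw [mul_sub, ← mul_assoc, ← mul_assoc, ← pow_succ, ← pow_add, Nat.sub_add_cancel hle, hexp,
    mul_pow, pow_mul]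

end Exponents

section Sigma

/-- The value of the polynomial `σ_n` at `v₂ = v`, `v₃ = w`, for elements `v`, `w` of an arbitrary
commutative semiring; `sigma p n` is definitionally `sigmaAt p n (X 0) (X 1)`. -/
def sigmaAt {A : Type*} [CommSemiring A] (p n : ℕ) (v w : A) : A :=
  ∑ k ∈ Finset.range n,
    v ^ (p ^ (2 * k) * mrwA p (2 * n - 2 * k - 1) - p ^ (2 * k + 1)) * w ^ (p ^ (2 * k))

theorem map_sigmaAt {A B : Type*} [CommSemiring A] [CommSemiring B] (f : A →+* B) (p n : ℕ)
    (v w : A) : f (sigmaAt p n v w) = sigmaAt p n (f v) (f w) := by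
  simp only [sigmaAt, map_sum, map_mul, map_pow]

theorem sigmaAt_succ_eq_sum_pow {A : Type*} [CommSemiring A] (p n : ℕ) (v w : A) :
    sigmaAt p (n + 1) v w =
      ∑ k ∈ Finset.range (n + 1), (v ^ (mrwA p (2 * (n - k) + 1) - p) * w) ^ p ^ (2 * k) := by
  refine Finset.sum_congr rfl fun k hk ↦ ?_
  have hindex : 2 * (n + 1) - 2 * k - 1 = 2 * (n - k) + 1 := by
    have := Finset.mem_range.mp hk
    lia
  rw [hindex, mul_pow, ← pow_mul, Nat.sub_mul, mul_comm (p ^ (2 * k)), pow_succ' p (2 * k)]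

variable {A : Type*} [CommRing A] (p : ℕ) [ExpChar A p]

theorem sigmaAt_sub (n : ℕ) (v w w' : A) :
    sigmaAt p n v (w - w') = sigmaAt p n v w - sigmaAt p n v w' := by
  simp only [sigmaAt, sub_pow_expChar_pow, mul_sub, Finset.sum_sub_distrib]

theorem sigmaAt_succ_mul_pow_sub_pow_mul (n : ℕ) (v t : A) :
    sigmaAt p (n + 1) v (v * t ^ p ^ 2 - v ^ p * t) =
      v ^ p ^ (2 * n) * t ^ p ^ (2 * n + 2) - v ^ mrwA p (2 * n + 1) * t := by
  let u (k : ℕ) : A := (v ^ mrwA p (2 * (n - k) + 1) * t) ^ p ^ (2 * k)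
  have hterm : ∀ k ∈ Finset.range n,
      (v ^ (mrwA p (2 * (n - k) + 1) - p) * (v * t ^ p ^ 2 - v ^ p * t)) ^ p ^ (2 * k) =
        u (k + 1) - u k := by
    intro k hk
    obtain ⟨j, rfl⟩ := Nat.exists_eq_add_of_lt (Finset.mem_range.mp hk)
    have hj : k + j + 1 - k = j + 1 := by lia
    have hj' : k + j + 1 - (k + 1) = j := by lia
    simp only [u, hj, hj']
    rw [show 2 * (j + 1) + 1 = 2 * j + 3 by rfl,
      pow_mrwA_sub_mul_mul_pow_sub_pow_mul (expChar_pos A p), sub_pow_expChar_pow,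
      ← pow_mul, ← pow_add, show 2 + 2 * k = 2 * (k + 1) by ring]
  have hlast : (v * t ^ p ^ 2 - v ^ p * t) ^ p ^ (2 * n) =
      v ^ p ^ (2 * n) * t ^ p ^ (2 * n + 2) - u n := by
    simp only [u, Nat.sub_self, mul_zero, zero_add, mrwA_one]
    rw [sub_pow_expChar_pow, mul_pow, ← pow_mul, ← pow_add, add_comm 2]
  calc
    sigmaAt p (n + 1) v (v * t ^ p ^ 2 - v ^ p * t)
    _ = (u n - u 0) + (v * t ^ p ^ 2 - v ^ p * t) ^ p ^ (2 * n) := by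
      rw [sigmaAt_succ_eq_sum_pow, Finset.sum_range_succ, Finset.sum_congr rfl hterm,
        Finset.sum_range_sub]
      simp [mrwA_one]
    _ = v ^ p ^ (2 * n) * t ^ p ^ (2 * n + 2) - u 0 := by
      rw [hlast]
      ring
    _ = v ^ p ^ (2 * n) * t ^ p ^ (2 * n + 2) - v ^ mrwA p (2 * n + 1) * t := by
      simp [u]

end Sigma

/-- `ηL` and `ηR` stand for the left and right units of a Hopf algebroid `(A, Γ)`, so that the
left-hand side is the cobar differential `d₀(σ_n)`; in `stmt_4` the left unit is the identity. -/
theorem stmt_4_general {A Γ : Type*} [CommSemiring A] [CommRing Γ] (p : ℕ) [ExpChar Γ p]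
    (ηL ηR : A →+* Γ) (v₂ v₃ : A) (t₁ : Γ) (hv₂ : ηR v₂ = ηL v₂)
    (hv₃ : ηR v₃ = ηL v₃ + ηL v₂ * t₁ ^ p ^ 2 - ηL v₂ ^ p * t₁) (n : ℕ) (hn : 1 ≤ n) :
    ηR (sigmaAt p n v₂ v₃) - ηL (sigmaAt p n v₂ v₃) =
      ηL v₂ ^ p ^ (2 * n - 2) * t₁ ^ p ^ (2 * n) - ηL v₂ ^ mrwA p (2 * n - 1) * t₁ := by
  obtain ⟨m, rfl⟩ := Nat.exists_eq_add_of_le' hn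
  have hdiff : ηR v₃ - ηL v₃ = ηL v₂ * t₁ ^ p ^ 2 - ηL v₂ ^ p * t₁ := by
    rw [hv₃]
    ring
  rw [map_sigmaAt, map_sigmaAt, hv₂, ← sigmaAt_sub, hdiff]
  exact sigmaAt_succ_mul_pow_sub_pow_mul p m (ηL v₂) t₁

theorem stmt_4 (p : ℕ) (hp : p.Prime) (hodd : Odd p) (n : ℕ) (hn : 1 ≤ n) :
    eta p (sigma p n) - sigma p n =
      X 0 ^ (p ^ (2 * n - 2)) * X 2 ^ (p ^ (2 * n)) - X 0 ^ (mrwA p (2 * n - 1)) * X 2 := by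
  have : Fact p.Prime := ⟨hp⟩
  exact stmt_4_general p (RingHom.id (R p)) (eta p) (X 0) (X 1) (X 2) (by simp [eta])
    (by simp [eta]) n hn
end

section
/- Let p be an odd prime and k ≥ 0 an integer. In the polynomial ring ℤ[x, y], one has the congruence (x + y)^{p^{k+1}} ≡ x^{p^{k+1}} + y^{p^{k+1}} + Σ_{j=1}^{p−1} C(p, j)·x^{j·p^k}·y^{(p−j)·p^k} modulo the ideal p²·ℤ[x, y], where C(p, j) denotes the binomial coefficient. (Equivalently, the cobar differential of t₁^{p^{k+1}} satisfies d₁(t₁^{p^{k+1}}) ≡ −p·b_{1,k} mod p², where b_{1,k} = Σ_{j=1}^{p−1} (1/p)C(p,j)·t₁^{j p^k} ⊗ t₁^{(p−j) p^k}.) -/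
/-!
Modulo `p`, the Frobenius congruence reads `(a + b) ^ p ^ k ≡ a ^ p ^ k + b ^ p ^ k`. Each `p`-th
power improves a congruence modulo `p ^ i`, `i ≥ 1`, to one modulo `p ^ (i + 1)`, so raising both
sides to the power `p ^ m` gives a congruence modulo `p ^ (m + 1)`, whose right-hand side is
expanded by the binomial theorem. The theorem is the case `m = 1`.
-/

open MvPolynomial

theorem add_pow_eq_add_sum_Ico_of_commute {R : Type*} [Semiring R] {a b : R} (h : Commute a b)
    {n : ℕ} (hn : n ≠ 0) :
    (a + b) ^ n = a ^ n + b ^ n +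
      ∑ j ∈ Finset.Ico 1 n, (n.choose j : R) * a ^ j * b ^ (n - j) := by
  have choose_mul_comm (j : ℕ) :
      a ^ j * b ^ (n - j) * (n.choose j : R) = (n.choose j : R) * a ^ j * b ^ (n - j) := by
    rw [← Nat.cast_comm, mul_assoc]
  rw [h.add_pow, Finset.sum_range_succ, Finset.range_eq_Ico,
    Finset.sum_eq_sum_Ico_succ_bot (Nat.pos_of_ne_zero hn)]
  simp only [choose_mul_comm, pow_zero, one_mul, mul_one, Nat.sub_zero, Nat.choose_zero_right,
    Nat.cast_one, Nat.sub_self, Nat.choose_self, zero_add]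
  abel

theorem dvd_add_pow_prime_pow_sub_of_commute {R : Type*} [Ring R] {a b : R} (h : Commute a b)
    {p : ℕ} (hp : p.Prime) (k : ℕ) :
    (p : R) ∣ (a + b) ^ p ^ k - (a ^ p ^ k + b ^ p ^ k) := by
  rw [h.add_pow_prime_pow_eq' hp, add_sub_cancel_left]
  exact dvd_mul_right _ _

section CommRing

variable {R : Type*} [CommRing R] {p : ℕ}

theorem pow_succ_dvd_add_pow_prime_pow_sub (hp : p.Prime) (a b : R) (k m : ℕ) :
    (p : R) ^ (m + 1) ∣ (a + b) ^ p ^ (k + m) - (a ^ p ^ k + b ^ p ^ k) ^ p ^ m := by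
  rw [pow_add p k m, pow_mul]
  exact dvd_sub_pow_of_dvd_sub (dvd_add_pow_prime_pow_sub_of_commute (.all a b) hp k) m

theorem stmt_6_general (hp : p.Prime) (a b : R) (k m : ℕ) :
    (a + b) ^ p ^ (k + m) -
        (a ^ p ^ (k + m) + b ^ p ^ (k + m) +
          ∑ j ∈ Finset.Ico 1 (p ^ m),
            ((p ^ m).choose j : R) * a ^ (j * p ^ k) * b ^ ((p ^ m - j) * p ^ k)) ∈
      Ideal.span {(p : R) ^ (m + 1)} := by
  have dvd_sub_binomial := pow_succ_dvd_add_pow_prime_pow_sub hp a b k m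
  rw [add_pow_eq_add_sum_Ico_of_commute (.all _ _) (pow_ne_zero m hp.ne_zero)] at dvd_sub_binomial
  simpa only [Ideal.mem_span_singleton, ← pow_mul, pow_add p k m, mul_comm (p ^ k)] using
    dvd_sub_binomial

end CommRing

theorem stmt_6 (p : ℕ) (hp : p.Prime) (hodd : Odd p) (k : ℕ) :
    (X 0 + X 1 : MvPolynomial (Fin 2) ℤ) ^ (p ^ (k + 1)) -
        (X 0 ^ (p ^ (k + 1)) + X 1 ^ (p ^ (k + 1)) +
          ∑ j ∈ Finset.Ico 1 p,
            (p.choose j : MvPolynomial (Fin 2) ℤ) * X 0 ^ (j * p ^ k) * X 1 ^ ((p - j) * p ^ k)) ∈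
      Ideal.span {((p : MvPolynomial (Fin 2) ℤ) ^ 2)} := by
  simpa only [pow_one] using stmt_6_general hp (X 0 : MvPolynomial (Fin 2) ℤ) (X 1) k 1
end
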